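/- Sharpness of the L∞ approximation order: for each n ≥ 2 let h := 1/(n−1) and let ρ_h be the set of uniformly spaced knots r_j := 1 + (j−1)h, j ∈ {1,…,n} (so [r₁,r_n] = [1,2]). Then for every ε > 0 there exist f_ε ∈ Λ₀ and a constant M > 0 such that for all sufficiently small h > 0 of this form and for every Beppo Levi L₀-spline σ_h ∈ S₀(ρ_h), one has M·h^{3/2+ε} ≤ sup_{r ∈ [1,2]} |f_ε(r) − σ_h(r)|. -/

import Mathlib

open MeasureTheory Set Filter

noncomputable section

/-- The radial Beppo Levi energy space `Λ₀`: functions `f : (0,∞) → ℂ` of class `C¹`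
whose derivative `f′` is locally absolutely continuous on compact subintervals of `(0,∞)`
(encoded by the fundamental theorem of calculus with an integrable density `f″`),
and whose radial Beppo Levi energy `∫₀^∞ ( r·|f″(r)|² + (1/r)·|f′(r)|² ) dr` is finite. -/
structure Lambda0 where
  f : ℝ → ℂ
  f' : ℝ → ℂ
  f'' : ℝ → ℂ
  hasDeriv : ∀ r ∈ Set.Ioi (0:ℝ), HasDerivAt f (f' r) r
  contDeriv : ContinuousOn f' (Set.Ioi 0)
  locAC : ∀ a b : ℝ, 0 < a → a ≤ b →
    MeasureTheory.IntegrableOn f'' (Set.Icc a b) ∧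
      ∀ x ∈ Set.Icc a b, f' x = f' a + ∫ t in a..x, f'' t
  energyFin : MeasureTheory.IntegrableOn
    (fun r : ℝ => r * ‖f'' r‖ ^ 2 + (1 / r) * ‖f' r‖ ^ 2) (Set.Ioi 0)

/-- The squared radial Beppo Levi energy `‖·‖₀²` of a function with first derivative `g'`
and second derivative `g''`. -/
def energySq (g' g'' : ℝ → ℂ) : ℝ :=
  ∫ r in Set.Ioi (0:ℝ), (r * ‖g'' r‖ ^ 2 + (1 / r) * ‖g' r‖ ^ 2)

/-- The seminorm `‖f‖₀`. -/
def Lambda0.seminorm0 (F : Lambda0) : ℝ :=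
  Real.sqrt (energySq F.f' F.f'')

/-- The semi-inner product `⟨f,g⟩₀`. -/
def innerBL (F G : Lambda0) : ℂ :=
  ∫ r in Set.Ioi (0:ℝ),
    ((r : ℂ) * F.f'' r * (starRingEnd ℂ) (G.f'' r) +
      (1 / (r : ℂ)) * F.f' r * (starRingEnd ℂ) (G.f' r))

/-- A Beppo Levi `L₀`-spline on the positive knots `r 1 < r 2 < … < r n`:
piecewise of the form `a·x² + b·x²·ln x + c + d·ln x` between consecutive knots,
of the form `a·x² + b·x²·ln x + c` on `(0, r 1)`, of the form `c + d·ln x` on `(r n, ∞)`,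
`C²` throughout `(0,∞)`, and continuously extended at `0`. -/
structure IsBLSpline (n : ℕ) (r : ℕ → ℝ) (η : ℝ → ℂ) : Prop where
  pieces : ∀ j : ℕ, 1 ≤ j → j + 1 ≤ n → ∃ a b c d : ℂ,
    ∀ x ∈ Set.Ioo (r j) (r (j + 1)),
      η x = a * (x : ℂ) ^ 2 + b * (x : ℂ) ^ 2 * (Real.log x : ℂ) + c + d * (Real.log x : ℂ)
  left : ∃ a b c : ℂ, ∀ x ∈ Set.Ioo (0 : ℝ) (r 1),
      η x = a * (x : ℂ) ^ 2 + b * (x : ℂ) ^ 2 * (Real.log x : ℂ) + c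
  right : ∃ c d : ℂ, ∀ x ∈ Set.Ioi (r n), η x = c + d * (Real.log x : ℂ)
  smooth : ContDiffOn ℝ 2 η (Set.Ioi 0)
  cont0 : ContinuousWithinAt η (Set.Ici 0) 0

/-- A Beppo Levi `L₀`-spline is non-singular if on `(0, r₁)` it has the form `a·x² + c`. -/
def NonSingularBLS (r1 : ℝ) (η : ℝ → ℂ) : Prop :=
  ∃ a c : ℂ, ∀ x ∈ Set.Ioo (0 : ℝ) r1, η x = a * (x : ℂ) ^ 2 + c

/-- Rabut's kernel `K`. -/
def Kfun (r t : ℝ) : ℝ :=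
  if r ≤ t then 0 else (1 / 4) * (t ^ 2 - r ^ 2 + (r ^ 2 + t ^ 2) * Real.log (r / t))

/-- The limiting kernel `H_{0,∞}` (with left endpoint knot `r1`). -/
def Hfun (r1 r t : ℝ) : ℝ :=
  Kfun r t - Kfun r r1 - Kfun r1 t + (1 / 4) * (r ^ 2 - r1 ^ 2) * Real.log (t / r1)

/-- The basis function `φ₀`. -/
def phi0 (r : ℝ) : ℝ :=
  if r ≤ 1 then r ^ 2 - r ^ 2 * Real.log r else 1 + Real.log r

/-- Johnson's compactly supported profile `η₂`. -/
def eta2 (x : ℝ) : ℂ :=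
  (((4 / 3 : ℝ) * (Real.log 2 - phi0 x + phi0 (x / 2)) : ℝ) : ℂ)

/-- The non-singular compactly supported profile `β`. -/
def betaFn (x : ℝ) : ℂ :=
  (((1 / 5 : ℝ) * (27 * Real.log 3 - 32 * Real.log 2 + 5 * phi0 x
      - 32 * phi0 (x / 2) + 27 * phi0 (x / 3)) : ℝ) : ℂ)

/-- `Ker L₀ = span{r², r² ln r, 1, ln r}`, as functions on `(0,∞)`. -/
def KerL0 : Set (ℝ → ℂ) :=
  {η | ∃ a b c d : ℂ, ∀ x : ℝ, 0 < x →
    η x = a * (x : ℂ) ^ 2 + b * (x : ℂ) ^ 2 * (Real.log x : ℂ) + c + d * (Real.log x : ℂ)}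

/-- `α(h) = inf_{η ∈ Ker L₀} sup_{t ∈ [0,1]} |t^μ − η(1+th)|`. -/
def alphaFn (μ h : ℝ) : ℝ :=
  sInf {v : ℝ | ∃ η ∈ KerL0,
    v = sSup ((fun t : ℝ => ‖((t ^ μ : ℝ) : ℂ) - η (1 + t * h)‖) '' Set.Icc (0 : ℝ) 1)}

/-!
Take `f = (log⁺ r) ^ μ` with `μ` slightly larger than `3 / 2`; then `f` lies in `Λ₀`, because
`r |f''|²` behaves like `(log r) ^ (2μ - 4)` at `r = 1` and `2μ - 4 > -1`. In the variable
`t = log r` the elements of `Ker L₀` become `a e^{2t} + b t e^{2t} + c + d t`, so their samples at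
the points `t = kδ` are annihilated by the difference operator `(E - 1)² (E - q)²`, where `E` is
the shift and `q = e^{2δ}`. The samples of `f` are `δ^μ k^μ`, and at `k = 0` the operator maps
`k^μ` to a number bounded away from zero, uniformly in `q ≥ 1`. With `δ` a fixed multiple of `h`,
this alone forces an error of order `h^μ` on the first knot interval.
-/

open scoped Topology Real
open Real (exp log)

section TruncatedPower

lemma continuous_max_zero_rpow {p : ℝ} (hp : 0 ≤ p) : Continuous fun u : ℝ => max 0 u ^ p :=
  (continuous_const.max continuous_id).rpow_const fun _ => Or.inr hp

lemma hasDerivAt_max_zero_rpow_of_ne {p u : ℝ} (hp0 : p ≠ 0) (hp1 : p ≠ 1) (hu : u ≠ 0) :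
    HasDerivAt (fun u : ℝ => max 0 u ^ p) (p * max 0 u ^ (p - 1)) u := by
  rcases hu.lt_or_gt with hneg | hpos
  · rw [max_eq_left hneg.le, Real.zero_rpow (sub_ne_zero.2 hp1), mul_zero]
    refine (hasDerivAt_const u (0 : ℝ)).congr_of_eventuallyEq ?_
    filter_upwards [Iio_mem_nhds hneg] with v hv
    rw [max_eq_left (le_of_lt hv), Real.zero_rpow hp0]
  · rw [max_eq_right hpos.le]
    refine (Real.hasDerivAt_rpow_const (Or.inl hu)).congr_of_eventuallyEq ?_
    filter_upwards [Ioi_mem_nhds hpos] with v hv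
    rw [max_eq_right (le_of_lt hv)]

lemma hasDerivAt_max_zero_rpow {p : ℝ} (hp : 1 < p) (u : ℝ) :
    HasDerivAt (fun u : ℝ => max 0 u ^ p) (p * max 0 u ^ (p - 1)) u :=
  hasDerivAt_of_hasDerivAt_of_ne' (x := 0) (g := fun u : ℝ => p * max 0 u ^ (p - 1))
    (fun _ => hasDerivAt_max_zero_rpow_of_ne (by positivity) hp.ne')
    (continuous_max_zero_rpow (by positivity)).continuousAt
    ((continuous_max_zero_rpow (by linarith)).const_mul p).continuousAt u

lemma hasDerivAt_posLog_rpow {p r : ℝ} (hp : 1 < p) (hr : r ≠ 0) :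
    HasDerivAt (fun r => log⁺ r ^ p) (p * log⁺ r ^ (p - 1) / r) r :=
  (hasDerivAt_max_zero_rpow hp (log r)).comp r (Real.hasDerivAt_log hr)

lemma hasDerivAt_posLog_rpow_of_log_ne_zero {p r : ℝ} (hp0 : p ≠ 0) (hp1 : p ≠ 1)
    (hr : log r ≠ 0) : HasDerivAt (fun r => log⁺ r ^ p) (p * log⁺ r ^ (p - 1) / r) r :=
  (hasDerivAt_max_zero_rpow_of_ne hp0 hp1 hr).comp r
    (Real.hasDerivAt_log (Real.log_ne_zero.1 hr).1)

lemma integrableOn_log_rpow_mul_rpow {s c : ℝ} (hs : -1 < s) (hc : c < -1) :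
    IntegrableOn (fun r => log r ^ s * r ^ c) (Ioi 1) := by
  have hexp :
      IntegrableOn (fun x : ℝ => x ^ s * exp (-(-(c + 1)) * x ^ (1 : ℝ))) (Ioi (log 1)) := by
    rw [Real.log_one]
    exact integrableOn_rpow_mul_exp_neg_mul_rpow hs one_pos (by linarith)
  refine ((integrableOn_comp_log_Ioi _ one_pos).2 hexp).congr_fun (fun r hr => ?_)
    measurableSet_Ioi
  have hr0 : 0 < r := one_pos.trans hr
  simp only [Real.rpow_one, neg_neg, smul_eq_mul]
  rw [mul_comm (c + 1), ← Real.rpow_def_of_pos hr0, Real.rpow_add_one hr0.ne']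
  field_simp

lemma integrableOn_posLog_rpow_mul_rpow {s c : ℝ} (hs : -1 < s) (hs0 : s ≠ 0) (hc : c < -1) :
    IntegrableOn (fun r => log⁺ r ^ s * r ^ c) (Ioi 0) := by
  rw [← Ioc_union_Ioi_eq_Ioi (zero_le_one' ℝ), integrableOn_union]
  constructor
  · refine (integrableOn_zero (ε' := ℝ)).congr_fun (fun r hr => ?_) measurableSet_Ioc
    have hlog : log⁺ r = 0 := (Real.posLog_eq_zero_iff r).2 (abs_le.2 ⟨by linarith [hr.1], hr.2⟩)
    simp only [hlog, Real.zero_rpow hs0, zero_mul]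
  · refine (integrableOn_log_rpow_mul_rpow hs hc).congr_fun (fun r hr => ?_) measurableSet_Ioi
    dsimp only
    rw [Real.posLog_eq_log ((le_of_lt hr).trans (le_abs_self r))]

end TruncatedPower

section TestFunction

variable {μ : ℝ}

/-- The first derivative of `r ↦ (log⁺ r) ^ μ` on `(0, ∞)`, for `μ > 1`. -/
def posLogRpowDeriv (μ r : ℝ) : ℝ := μ * log⁺ r ^ (μ - 1) / r

/-- The second derivative of `r ↦ (log⁺ r) ^ μ` on `(0, ∞)`, for `μ > 1`, off the point `r = 1`
where it need not exist. For `μ = 2` the convention `0 ^ 0 = 1` makes this formula wrong on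
`(0, 1)`. -/
def posLogRpowDeriv₂ (μ r : ℝ) : ℝ :=
  μ * ((μ - 1) * log⁺ r ^ (μ - 2) - log⁺ r ^ (μ - 1)) / r ^ 2

lemma continuousOn_posLogRpowDeriv (hμ : 1 ≤ μ) : ContinuousOn (posLogRpowDeriv μ) (Ioi 0) :=
  ((Real.continuous_posLog.rpow_const fun _ => Or.inr (by linarith)).const_mul μ).continuousOn.div
    continuousOn_id fun _ hr => ne_of_gt hr

lemma hasDerivAt_posLogRpowDeriv (hμ1 : μ ≠ 1) (hμ2 : μ ≠ 2) {r : ℝ} (hr : log r ≠ 0) :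
    HasDerivAt (posLogRpowDeriv μ) (posLogRpowDeriv₂ μ r) r := by
  have hr0 : r ≠ 0 := (Real.log_ne_zero.1 hr).1
  have hpow := hasDerivAt_posLog_rpow_of_log_ne_zero (p := μ - 1) (sub_ne_zero.2 hμ1)
    (fun h => hμ2 (by linarith)) hr
  refine ((hpow.const_mul μ).div (hasDerivAt_id r) hr0).congr_deriv ?_
  rw [posLogRpowDeriv₂, show μ - 1 - 1 = μ - 2 by ring]
  simp only [id]
  field_simp

lemma integrableOn_posLogRpowDeriv₂ (hμ1 : 1 < μ) (hμ2 : μ ≠ 2) :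
    IntegrableOn (posLogRpowDeriv₂ μ) (Ioi 0) := by
  have hsing := integrableOn_posLog_rpow_mul_rpow (s := μ - 2) (c := -2) (by linarith)
    (sub_ne_zero.2 hμ2) (by norm_num)
  have hreg := integrableOn_posLog_rpow_mul_rpow (s := μ - 1) (c := -2) (by linarith)
    (by linarith) (by norm_num)
  refine IntegrableOn.congr_fun ((hsing.const_mul (μ * (μ - 1))).sub (hreg.const_mul μ))
    (fun r hr => ?_) measurableSet_Ioi
  simp only [Pi.sub_apply, posLogRpowDeriv₂, Real.rpow_neg (le_of_lt hr), Real.rpow_ofNat]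
  ring

lemma intervalIntegral_posLogRpowDeriv₂ (hμ1 : 1 < μ) (hμ2 : μ ≠ 2) {a b : ℝ} (ha : 0 < a)
    (hab : a ≤ b) :
    ∫ r in a..b, posLogRpowDeriv₂ μ r = posLogRpowDeriv μ b - posLogRpowDeriv μ a := by
  refine integral_eq_of_hasDerivAt_off_countable_of_le _ _ hab (countable_singleton (1 : ℝ))
    ((continuousOn_posLogRpowDeriv hμ1.le).mono fun r hr => ha.trans_le hr.1)
    (fun r hr => hasDerivAt_posLogRpowDeriv hμ1.ne' hμ2
      (Real.log_ne_zero_of_pos_of_ne_one (ha.trans hr.1.1) hr.2)) ?_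
  rw [intervalIntegrable_iff_integrableOn_Icc_of_le hab]
  exact (integrableOn_posLogRpowDeriv₂ hμ1 hμ2).mono_set fun r hr => ha.trans_le hr.1

lemma integrableOn_energy_posLog_rpow (hμ : 3 / 2 < μ) (hμ2 : μ ≠ 2) :
    IntegrableOn (fun r => r * posLogRpowDeriv₂ μ r ^ 2 + 1 / r * posLogRpowDeriv μ r ^ 2)
      (Ioi 0) := by
  have hint : ∀ s : ℝ, -1 < s → s ≠ 0 → IntegrableOn (fun r => log⁺ r ^ s * r ^ (-3 : ℝ)) (Ioi 0) :=
    fun s hs hs0 => integrableOn_posLog_rpow_mul_rpow hs hs0 (by norm_num)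
  have h₁ := hint ((μ - 2) * 2) (by linarith) (mul_ne_zero (sub_ne_zero.2 hμ2) two_ne_zero)
  have h₂ := hint ((μ - 2) + (μ - 1)) (by linarith) (by linarith)
  have h₃ := hint ((μ - 1) * 2) (by linarith) (by linarith)
  refine IntegrableOn.congr_fun (((h₁.const_mul (μ ^ 2 * (μ - 1) ^ 2)).sub
    (h₂.const_mul (2 * μ ^ 2 * (μ - 1)))).add (h₃.const_mul (2 * μ ^ 2)))
    (fun r hr => ?_) measurableSet_Ioi
  have hr0 : 0 < r := hr
  have hlog : 0 ≤ log⁺ r := Real.posLog_nonneg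
  simp only [Pi.add_apply, Pi.sub_apply, posLogRpowDeriv, posLogRpowDeriv₂,
    Real.rpow_neg hr0.le, Real.rpow_ofNat, Real.rpow_mul hlog,
    Real.rpow_add' hlog (show (μ - 2) + (μ - 1) ≠ 0 by linarith)]
  field_simp
  ring

/-- The function `r ↦ (log⁺ r) ^ μ` as an element of `Λ₀`, the function that splines cannot
approximate well. -/
def Lambda0.posLogRpow (μ : ℝ) (hμ : 3 / 2 < μ) (hμ2 : μ ≠ 2) : Lambda0 where
  f r := (log⁺ r ^ μ : ℝ)
  f' r := (posLogRpowDeriv μ r : ℝ)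
  f'' r := (posLogRpowDeriv₂ μ r : ℝ)
  hasDeriv r hr := (hasDerivAt_posLog_rpow (by linarith) (ne_of_gt hr)).ofReal_comp
  contDeriv := Complex.continuous_ofReal.comp_continuousOn
    (continuousOn_posLogRpowDeriv (by linarith))
  locAC a b ha _ := by
    have hμ1 : 1 < μ := by linarith
    refine ⟨((integrableOn_posLogRpowDeriv₂ hμ1 hμ2).mono_set fun r hr => ha.trans_le hr.1).ofReal,
      fun x hx => ?_⟩
    rw [intervalIntegral.integral_ofReal, intervalIntegral_posLogRpowDeriv₂ hμ1 hμ2 ha hx.1]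
    push_cast
    ring
  energyFin := by
    simpa only [Complex.norm_real, Real.norm_eq_abs, sq_abs]
      using integrableOn_energy_posLog_rpow hμ hμ2

lemma Lambda0.posLogRpow_f_exp (hμ : 3 / 2 < μ) (hμ2 : μ ≠ 2) {t : ℝ} (ht : 0 ≤ t) :
    (Lambda0.posLogRpow μ hμ hμ2).f (exp t) = (t ^ μ : ℝ) := by
  change ((log⁺ (exp t) ^ μ : ℝ) : ℂ) = _
  rw [Real.posLog_eq_log ((Real.one_le_exp ht).trans (le_abs_self _)), Real.log_exp]

lemma Lambda0.continuousOn_f (F : Lambda0) : ContinuousOn F.f (Ioi 0) :=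
  fun r hr => (F.hasDeriv r hr).continuousAt.continuousWithinAt

end TestFunction

section DifferenceOperator

/-- The difference operator `E - q`, where `E` is the shift of sequences. -/
def geomDiff {R : Type*} [CommRing R] (q : R) : Module.End R (ℕ → R) :=
  LinearMap.funLeft R R Nat.succ - q • 1

/-- The difference operator `(E - 1)² (E - q)²`, where `E` is the shift of sequences. For
`q = e^{2δ}` it annihilates the samples at the points `e^{kδ}` of the functions in `Ker L₀`. -/
def kerDiff {R : Type*} [CommRing R] (q : R) : Module.End R (ℕ → R) :=
  geomDiff 1 ^ 2 * geomDiff q ^ 2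

lemma geomDiff_apply {R : Type*} [CommRing R] (q : R) (e : ℕ → R) (k : ℕ) :
    geomDiff q e k = e (k + 1) - q * e k := rfl

lemma kerDiff_apply {R : Type*} [CommRing R] (q : R) (e : ℕ → R) (k : ℕ) :
    kerDiff q e k = e (k + 4) - 2 * (q + 1) * e (k + 3) + (q ^ 2 + 4 * q + 1) * e (k + 2)
      - 2 * (q ^ 2 + q) * e (k + 1) + q ^ 2 * e k := by
  simp only [kerDiff, pow_two, Module.End.mul_apply, geomDiff_apply]
  ring

lemma map_kerDiff {R S : Type*} [CommRing R] [CommRing S] (φ : R →+* S) (q : R) (e : ℕ → R)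
    (k : ℕ) : φ (kerDiff q e k) = kerDiff (φ q) (φ ∘ e) k := by
  simp [kerDiff_apply, map_ofNat]

lemma kerDiff_mul_pow_add_eq_zero {R : Type*} [CommRing R] (q a b c d : R) :
    kerDiff q (fun k => a * q ^ k + b * q ^ k * k + c + d * k) = 0 := by
  ext k
  simp only [kerDiff_apply, Pi.zero_apply]
  push_cast
  ring

section Norm

variable {R : Type*} [NormedCommRing R] {q : R} {e : ℕ → R} {S : ℝ} {m : ℕ}

lemma norm_geomDiff_le (he : ∀ k ≤ m + 1, ‖e k‖ ≤ S) :
    ∀ k ≤ m, ‖geomDiff q e k‖ ≤ (1 + ‖q‖) * S := by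
  intro k hk
  calc ‖geomDiff q e k‖ ≤ ‖e (k + 1)‖ + ‖q‖ * ‖e k‖ :=
        norm_sub_le_of_le le_rfl (norm_mul_le _ _)
    _ ≤ S + ‖q‖ * S := by gcongr <;> exact he _ (by lia)
    _ = (1 + ‖q‖) * S := by ring

lemma norm_kerDiff_le [NormOneClass R] (he : ∀ k ≤ m + 4, ‖e k‖ ≤ S) :
    ∀ k ≤ m, ‖kerDiff q e k‖ ≤ 4 * (1 + ‖q‖) ^ 2 * S := by
  intro k hk
  have h := norm_geomDiff_le (q := (1 : R)) (norm_geomDiff_le (q := (1 : R))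
    (norm_geomDiff_le (q := q) (norm_geomDiff_le (q := q) he))) k hk
  rw [norm_one] at h
  calc ‖kerDiff q e k‖ ≤ (1 + 1) * ((1 + 1) * ((1 + ‖q‖) * ((1 + ‖q‖) * S))) := h
    _ = 4 * (1 + ‖q‖) ^ 2 * S := by ring

end Norm

lemma kerDiff_natCast_rpow_zero {μ : ℝ} (hμ : μ ≠ 0) (q : ℝ) :
    kerDiff q (fun k : ℕ => (k : ℝ) ^ μ) 0 =
      (2 ^ μ) ^ 2 - 2 * (q + 1) * 3 ^ μ + (q ^ 2 + 4 * q + 1) * 2 ^ μ - 2 * (q ^ 2 + q) := by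
  have h4 : (4 : ℝ) ^ μ = (2 ^ μ) ^ 2 := by
    rw [← Real.rpow_mul_natCast two_pos.le, mul_comm, Real.rpow_natCast_mul two_pos.le]
    norm_num
  rw [kerDiff_apply]
  norm_num [h4, Real.zero_rpow hμ]

-- The value at `μ = 3 / 2`, `q = 1` is `4 + 12√2 - 12√3 ≈ 0.186`.
lemma eventually_one_tenth_lt_kerDiff_rpow :
    ∀ᶠ μ in 𝓝 (3 / 2 : ℝ), ∀ q : ℝ, 1 ≤ q → 1 / 10 < kerDiff q (fun k : ℕ => (k : ℝ) ^ μ) 0 := by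
  have rpow_three_halves : ∀ x : ℝ, 0 < x → x ^ (3 / 2 : ℝ) = x * √x := fun x hx => by
    rw [show (3 / 2 : ℝ) = 1 + 1 / 2 by norm_num, Real.rpow_add hx, Real.rpow_one,
      Real.sqrt_eq_rpow]
  have sqrt_two_gt : 1.414 < √2 := Real.lt_sqrt_of_sq_lt (by norm_num)
  have sqrt_three_lt : √3 < 1.733 := (Real.sqrt_lt' (by norm_num)).2 (by norm_num)
  have tendsto_two : Tendsto (fun μ : ℝ => (2 : ℝ) ^ μ) (𝓝 (3 / 2)) (𝓝 (2 * √2)) :=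
    rpow_three_halves 2 two_pos ▸ (Real.continuous_const_rpow two_ne_zero).tendsto _
  have tendsto_three : Tendsto (fun μ : ℝ => (3 : ℝ) ^ μ) (𝓝 (3 / 2)) (𝓝 (3 * √3)) :=
    rpow_three_halves 3 three_pos ▸ (Real.continuous_const_rpow three_ne_zero).tendsto _
  filter_upwards [lt_mem_nhds (show (0 : ℝ) < 3 / 2 by norm_num),
    tendsto_two.eventually_const_lt (show 2.827 < 2 * √2 by linarith),
    tendsto_three.eventually_lt_const (show 3 * √3 < 5.2 by linarith)] with μ hμ h2 h3 q hq
  rw [kerDiff_natCast_rpow_zero hμ.ne']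
  generalize (2 : ℝ) ^ μ = x at *
  generalize (3 : ℝ) ^ μ = y at *
  have at_one : 1 / 10 < x ^ 2 + 6 * x - 4 * y - 4 := by nlinarith
  have increment : 0 ≤ (q - 1) * ((x - 2) * (q - 1) + (6 * x - 2 * y - 6)) :=
    mul_nonneg (by linarith)
      (add_nonneg (mul_nonneg (by linarith) (by linarith)) (by linarith))
  linarith

end DifferenceOperator

section LowerBound

lemma continuousOn_of_mem_KerL0 {η : ℝ → ℂ} (hη : η ∈ KerL0) : ContinuousOn η (Ioi 0) := by
  obtain ⟨a, b, c, d, hη⟩ := hη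
  have hlog : ContinuousOn (fun x : ℝ => (log x : ℂ)) (Ioi 0) :=
    Complex.continuous_ofReal.comp_continuousOn
      (Real.continuousOn_log.mono fun x hx => ne_of_gt hx)
  exact ContinuousOn.congr (by fun_prop) hη

lemma eqOn_Icc_of_eqOn_Ioo_of_mem_KerL0 {σ η : ℝ → ℂ} {a b : ℝ} (ha : 0 < a) (hab : a < b)
    (hσ : ContinuousOn σ (Icc a b)) (hη : η ∈ KerL0) (h : EqOn σ η (Ioo a b)) :
    EqOn σ η (Icc a b) :=
  h.of_subset_closure hσ ((continuousOn_of_mem_KerL0 hη).mono fun _ hx => ha.trans_le hx.1)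
    Ioo_subset_Icc_self (closure_Ioo hab.ne).ge

lemma kerDiff_comp_exp_of_mem_KerL0 {η : ℝ → ℂ} (hη : η ∈ KerL0) (δ : ℝ) :
    kerDiff (exp (2 * δ) : ℂ) (fun k : ℕ => η (exp (k * δ))) = 0 := by
  obtain ⟨a, b, c, d, hη⟩ := hη
  rw [← kerDiff_mul_pow_add_eq_zero (exp (2 * δ) : ℂ) a (b * δ) c (d * δ)]
  congr 1
  ext k
  have hsq : (exp (k * δ) : ℂ) ^ 2 = (exp (2 * δ) : ℂ) ^ k := by
    norm_cast
    rw [← Real.exp_nat_mul, ← Real.exp_nat_mul]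
    ring_nf
  rw [hη _ (Real.exp_pos _), Real.log_exp, hsq]
  push_cast
  ring

lemma rpow_mul_kerDiff_rpow_le {μ δ S : ℝ} {η : ℝ → ℂ} (hδ : 0 ≤ δ) (hη : η ∈ KerL0)
    (hS : ∀ k : ℕ, k ≤ 4 → ‖(((k * δ) ^ μ : ℝ) : ℂ) - η (exp (k * δ))‖ ≤ S) :
    δ ^ μ * kerDiff (exp (2 * δ)) (fun k : ℕ => (k : ℝ) ^ μ) 0 ≤
      4 * (1 + exp (2 * δ)) ^ 2 * S := by
  set q := exp (2 * δ)
  set f : ℕ → ℝ := fun k => (k * δ) ^ μ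
  set g : ℕ → ℂ := fun k => η (exp (k * δ))
  have hg : kerDiff (q : ℂ) g = 0 := kerDiff_comp_exp_of_mem_KerL0 hη δ
  have hf : kerDiff q f 0 = δ ^ μ * kerDiff q (fun k : ℕ => (k : ℝ) ^ μ) 0 := by
    have hscale : f = δ ^ μ • fun k : ℕ => (k : ℝ) ^ μ := by
      ext k
      rw [Pi.smul_apply, smul_eq_mul, mul_comm, ← Real.mul_rpow k.cast_nonneg hδ]
    rw [hscale, map_smul, Pi.smul_apply, smul_eq_mul]
  have hdiff : kerDiff (q : ℂ) (Complex.ofRealHom ∘ f - g) 0 = (kerDiff q f 0 : ℂ) := by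
    rw [map_sub, hg, sub_zero]
    exact (map_kerDiff Complex.ofRealHom q f 0).symm
  have hnorm : ‖kerDiff (q : ℂ) (Complex.ofRealHom ∘ f - g) 0‖ ≤ 4 * (1 + ‖(q : ℂ)‖) ^ 2 * S :=
    norm_kerDiff_le (m := 0) hS 0 le_rfl
  rw [hdiff, Complex.norm_real, Complex.norm_real, hf,
    Real.norm_of_nonneg (Real.exp_pos _).le] at hnorm
  exact (Real.le_norm_self _).trans hnorm

lemma exp_half_le_one_add {h : ℝ} (h0 : 0 ≤ h) (h1 : h ≤ 1) : exp (h / 2) ≤ 1 + h := by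
  calc exp (h / 2) ≤ 1 / (1 - h / 2) :=
        Real.exp_bound_div_one_sub_of_interval (by linarith) (by linarith)
    _ ≤ 1 + h := by
        rw [div_le_iff₀ (by linarith)]
        nlinarith

lemma mul_rpow_le_sSup_norm_posLogRpow_sub {μ : ℝ} (hμ : 3 / 2 < μ) (hμ2 : μ ≠ 2)
    (hker : ∀ q : ℝ, 1 ≤ q → 1 / 10 < kerDiff q (fun k : ℕ => (k : ℝ) ^ μ) 0)
    {h : ℝ} (hh : h ∈ Ioc 0 1) {σ η : ℝ → ℂ} (hσ : ContinuousOn σ (Icc 1 2))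
    (hη : η ∈ KerL0) (hση : EqOn σ η (Ioo 1 (1 + h))) :
    (1 / 8) ^ μ / 360 * h ^ μ ≤
      sSup ((fun x => ‖(Lambda0.posLogRpow μ hμ hμ2).f x - σ x‖) '' Icc 1 2) := by
  obtain ⟨h0, h1⟩ := hh
  set F := Lambda0.posLogRpow μ hμ hμ2
  set S := sSup ((fun x => ‖F.f x - σ x‖) '' Icc 1 2)
  set δ := h / 8 with hδ
  have hδ0 : 0 < δ := by positivity
  have hsub : Icc 1 (1 + h) ⊆ Icc 1 2 := Icc_subset_Icc_right (by linarith)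
  have hcont : ContinuousOn (fun x => ‖F.f x - σ x‖) (Icc 1 2) :=
    ((F.continuousOn_f.mono fun x hx => one_pos.trans_le hx.1).sub hσ).norm
  have hclosed : EqOn σ η (Icc 1 (1 + h)) :=
    eqOn_Icc_of_eqOn_Ioo_of_mem_KerL0 one_pos (by linarith) (hσ.mono hsub) hη hση
  have hnode : ∀ k : ℕ, k ≤ 4 → exp (k * δ) ∈ Icc 1 (1 + h) := fun k hk => by
    have hk4 : (k : ℝ) ≤ 4 := by exact_mod_cast hk
    refine ⟨Real.one_le_exp (by positivity), ?_⟩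
    exact (Real.exp_le_exp.2 (by nlinarith)).trans (exp_half_le_one_add h0.le h1)
  have herr : ∀ k : ℕ, k ≤ 4 → ‖(((k * δ) ^ μ : ℝ) : ℂ) - η (exp (k * δ))‖ ≤ S := fun k hk => by
    rw [← Lambda0.posLogRpow_f_exp hμ hμ2 (by positivity), ← hclosed (hnode k hk)]
    exact hcont.le_sSup_image_Icc (hsub (hnode k hk))
  have hS : 0 ≤ S := (norm_nonneg _).trans (herr 0 (by norm_num))
  have hq1 : 1 ≤ exp (2 * δ) := Real.one_le_exp (by positivity)
  have hq2 : exp (2 * δ) ≤ 2 := by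
    have := (hnode 2 (by norm_num)).2
    push_cast at this
    linarith
  have hδμ : (1 / 8 : ℝ) ^ μ * h ^ μ = δ ^ μ := by
    rw [← Real.mul_rpow (by norm_num) h0.le, hδ, one_div_mul_eq_div]
  suffices δ ^ μ * (1 / 10) ≤ 36 * S by rw [div_mul_eq_mul_div, hδμ]; linarith
  calc δ ^ μ * (1 / 10)
      ≤ δ ^ μ * kerDiff (exp (2 * δ)) (fun k : ℕ => (k : ℝ) ^ μ) 0 := by
        gcongr
        exact (hker _ hq1).le
    _ ≤ 4 * (1 + exp (2 * δ)) ^ 2 * S := rpow_mul_kerDiff_rpow_le hδ0.le hη herr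
    _ ≤ 4 * (1 + 2) ^ 2 * S := by gcongr
    _ = 36 * S := by ring

lemma exists_exponent_near_three_halves {ε : ℝ} (hε : 0 < ε) :
    ∃ μ : ℝ, 3 / 2 < μ ∧ μ ≠ 2 ∧ μ < 3 / 2 + ε ∧
      ∀ q : ℝ, 1 ≤ q → 1 / 10 < kerDiff q (fun k : ℕ => (k : ℝ) ^ μ) 0 := by
  have hlt : ∀ c : ℝ, 3 / 2 < c → ∀ᶠ μ in 𝓝[>] (3 / 2 : ℝ), μ < c := fun c hc =>
    (gt_mem_nhds hc).filter_mono nhdsWithin_le_nhds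
  obtain ⟨μ, ⟨⟨hμ, hker⟩, hμε⟩, hμ2⟩ := (((eventually_mem_nhdsWithin (s := Ioi (3 / 2 : ℝ))).and
    (eventually_one_tenth_lt_kerDiff_rpow.filter_mono nhdsWithin_le_nhds)).and
    (hlt (3 / 2 + ε) (by linarith))).and (hlt 2 (by norm_num)) |>.exists
  exact ⟨μ, hμ, hμ2.ne, hμε, hker⟩

end LowerBound

section UniformKnots

lemma one_div_natCast_sub_one_mem_Ioc {n : ℕ} (hn : 2 ≤ n) : 1 / ((n : ℝ) - 1) ∈ Ioc (0 : ℝ) 1 := by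
  have hn1 : (1 : ℝ) ≤ n - 1 := by
    have : (2 : ℝ) ≤ n := by exact_mod_cast hn
    linarith
  exact ⟨by positivity, (div_le_one (by positivity)).2 hn1⟩

lemma IsBLSpline.exists_mem_KerL0_eqOn {n : ℕ} {r : ℕ → ℝ} {σ : ℝ → ℂ} (hσ : IsBLSpline n r σ)
    {j : ℕ} (hj : 1 ≤ j) (hjn : j + 1 ≤ n) :
    ∃ η ∈ KerL0, EqOn σ η (Ioo (r j) (r (j + 1))) := by
  obtain ⟨a, b, c, d, h⟩ := hσ.pieces j hj hjn
  exact ⟨_, ⟨a, b, c, d, fun _ _ => rfl⟩, h⟩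

lemma IsBLSpline.exists_mem_KerL0_eqOn_of_uniform {n : ℕ} (hn : 2 ≤ n) {h : ℝ} {σ : ℝ → ℂ}
    (hσ : IsBLSpline n (fun j => 1 + ((j : ℝ) - 1) * h) σ) :
    ∃ η ∈ KerL0, EqOn σ η (Ioo 1 (1 + h)) := by
  convert hσ.exists_mem_KerL0_eqOn le_rfl hn using 4
  norm_num

end UniformKnots

theorem stmt15_general {ε : ℝ} (hε : 0 < ε) :
    ∃ (F : Lambda0) (M : ℝ), 0 < M ∧ ∀ h ∈ Ioc (0 : ℝ) 1, ∀ σ : ℝ → ℂ,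
      ContinuousOn σ (Icc 1 2) → (∃ η ∈ KerL0, EqOn σ η (Ioo 1 (1 + h))) →
        M * h ^ ((3 : ℝ) / 2 + ε) ≤ sSup ((fun x => ‖F.f x - σ x‖) '' Icc (1 : ℝ) 2) := by
  obtain ⟨μ, hμ, hμ2, hμε, hker⟩ := exists_exponent_near_three_halves hε
  refine ⟨Lambda0.posLogRpow μ hμ hμ2, (1 / 8) ^ μ / 360, by positivity, ?_⟩
  rintro h hh σ hσ ⟨η, hη, hση⟩
  calc (1 / 8) ^ μ / 360 * h ^ ((3 : ℝ) / 2 + ε) ≤ (1 / 8) ^ μ / 360 * h ^ μ := by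
        gcongr ?_ * ?_
        exact Real.rpow_le_rpow_of_exponent_ge hh.1 hh.2 hμε.le
    _ ≤ _ := mul_rpow_le_sSup_norm_posLogRpow_sub hμ hμ2 hker hh hσ hη hση

/-- sharpness of the approximation order `3/2`: for uniformly spaced knots
`r_j = 1 + (j−1)h` on `[1,2]` with `h = 1/(n−1)`, for every `ε > 0` there are
`f_ε ∈ Λ₀` and `M > 0` such that for all sufficiently large `n` and every Beppo Levi
`L₀`-spline `σ_h` on these knots, `M·h^{3/2+ε} ≤ ‖f_ε − σ_h‖_{L∞[1,2]}`. -/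
theorem stmt15 :
    ∀ ε : ℝ, 0 < ε → ∃ (F : Lambda0) (M : ℝ), 0 < M ∧ ∃ N : ℕ, ∀ n : ℕ, 2 ≤ n → N ≤ n →
      ∀ σ : ℝ → ℂ,
        IsBLSpline n (fun j => 1 + ((j : ℝ) - 1) * (1 / ((n : ℝ) - 1))) σ →
        M * (1 / ((n : ℝ) - 1)) ^ ((3:ℝ)/2 + ε) ≤
          sSup ((fun x => ‖F.f x - σ x‖) '' Set.Icc (1:ℝ) 2) := by
  intro ε hε
  obtain ⟨F, M, hM, hF⟩ := stmt15_general hε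
  exact ⟨F, M, hM, 0, fun n hn _ σ hσ => hF _ (one_div_natCast_sub_one_mem_Ioc hn) σ
    (hσ.smooth.continuousOn.mono fun _ hx => one_pos.trans_le hx.1)
    (hσ.exists_mem_KerL0_eqOn_of_uniform hn)⟩
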